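/- arXiv:2504.10530 — 2 statements merged into one kernel-verified Lean document; each statement's English description precedes it below -/
import Mathlib

section
/- Let β > 0 and q_n = e^{−β} β^n / n! for n ∈ ℕ. Let (Ω, μ) be a probability space carrying {0,1}-valued random variables (J_n)_{n∈ℕ} and random variables (L_n)_{n∈ℕ} with values in [0,1], and let (Ω', ρ) be a probability space carrying {0,1}-valued random variables (I_n)_{n∈ℕ} that are pointwise nonincreasing in n, such that E_ρ[I_n] = E_μ[J_n L_n] =: p_n for every n. Then E_μ[(Σ_n q_n J_n L_n)²] ≤ E_ρ[(Σ_n q_n I_n)²] ≤ Σ_n q_n p_n. Consequently, since all three estimators Ỹ = Σ_n q_n J_n L_n (under μ), Ŷ = Σ_n q_n I_n (under ρ), and the Bernoulli estimator with success probability p* = Σ_n q_n p_n have the same mean p*, their variances satisfy Var_μ(Ỹ) ≤ Var_ρ(Ŷ) ≤ p*(1 − p*). -/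
open MeasureTheory ProbabilityTheory

/-- The Poisson(β) probability mass function `q_n = e^{-β} β^n / n!`. -/
noncomputable def poissonPMF (β : ℝ) (n : ℕ) : ℝ := Real.exp (-β) * β ^ n / n.factorial

/-!
The second moment of a weighted sum `∑ q_i X_i` is the sum of the mixed moments `E[X_i X_j]` with
weights `q_i q_j`. For `[0,1]`-valued variables with means `p_i` each mixed moment is at most
`min p_i p_j`, and nested indicators with the same means attain this bound.
-/

lemma poissonPMF_nonneg {β : ℝ} (hβ : 0 ≤ β) (n : ℕ) : 0 ≤ poissonPMF β n := by
  unfold _root_.poissonPMF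
  positivity

lemma hasSum_poissonPMF {β : ℝ} (hβ : 0 ≤ β) : HasSum (poissonPMF β) 1 :=
  hasSum_one_poissonMeasure ⟨β, hβ⟩

section Moments

variable {Ω Ω' : Type*} [MeasurableSpace Ω] [MeasurableSpace Ω'] {μ : Measure Ω} {ρ : Measure Ω'}
  {f g : Ω → ℝ}

lemma ae_norm_mul_le {C D : ℝ} (hf : ∀ᵐ ω ∂μ, ‖f ω‖ ≤ C) (hg : ∀ᵐ ω ∂μ, ‖g ω‖ ≤ D) :
    ∀ᵐ ω ∂μ, ‖f ω * g ω‖ ≤ C * D := by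
  filter_upwards [hf, hg] with ω hf hg using norm_mul_le_of_le hf hg

lemma ae_norm_le_one_of_mem_Icc (hf : ∀ᵐ ω ∂μ, f ω ∈ Set.Icc (0 : ℝ) 1) :
    ∀ᵐ ω ∂μ, ‖f ω‖ ≤ 1 := by
  filter_upwards [hf] with ω h
  rw [Real.norm_of_nonneg h.1]
  exact h.2

lemma ae_mem_Icc_of_eq_zero_or_one (hf : ∀ᵐ ω ∂μ, f ω = 0 ∨ f ω = 1) :
    ∀ᵐ ω ∂μ, f ω ∈ Set.Icc (0 : ℝ) 1 := by
  filter_upwards [hf] with ω h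
  rcases h with h | h <;> simp [h]

lemma integral_mul_le_left (hf : Integrable f μ) (hf0 : 0 ≤ᵐ[μ] f)
    (hg : ∀ᵐ ω ∂μ, g ω ∈ Set.Icc (0 : ℝ) 1) : ∫ ω, f ω * g ω ∂μ ≤ ∫ ω, f ω ∂μ := by
  refine integral_mono_of_nonneg ?_ hf ?_
  · filter_upwards [hf0, hg] with ω h0 h using mul_nonneg h0 h.1
  · filter_upwards [hf0, hg] with ω h0 h using mul_le_of_le_one_right h0 h.2

lemma integral_mul_eq_left_of_eq_zero_or_one (hf : ∀ᵐ ω ∂μ, f ω = 0 ∨ f ω = 1)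
    (hg : ∀ᵐ ω ∂μ, g ω ≤ 1) (hfg : f ≤ᵐ[μ] g) : ∫ ω, f ω * g ω ∂μ = ∫ ω, f ω ∂μ := by
  refine integral_congr_ae ?_
  filter_upwards [hf, hg, hfg] with ω hf hg hfg
  rcases hf with hf | hf
  · rw [hf, zero_mul]
  · rw [le_antisymm hg (hf ▸ hfg), mul_one]

lemma integral_sq_le_integral_of_mem_Icc [IsFiniteMeasure μ] (hf : AEMeasurable f μ)
    (hf01 : ∀ᵐ ω ∂μ, f ω ∈ Set.Icc (0 : ℝ) 1) : ∫ ω, f ω ^ 2 ∂μ ≤ ∫ ω, f ω ∂μ := by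
  simp_rw [sq]
  exact integral_mul_le_left (.of_mem_Icc 0 1 hf hf01) (hf01.mono fun _ h => h.1) hf01

lemma variance_le_variance_of_integral_sq_le [IsProbabilityMeasure μ] [IsProbabilityMeasure ρ]
    {h : Ω' → ℝ} (hf : MemLp f 2 μ) (hh : MemLp h 2 ρ)
    (hmean : ∫ ω, f ω ∂μ = ∫ ω, h ω ∂ρ) (hsq : ∫ ω, f ω ^ 2 ∂μ ≤ ∫ ω, h ω ^ 2 ∂ρ) :
    variance f μ ≤ variance h ρ := by
  rw [variance_eq_sub hf, variance_eq_sub hh, hmean]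
  exact sub_le_sub_right hsq _

lemma integral_mul_le_integral_mul_of_nested {ι : Type*} {X : ι → Ω → ℝ} {Y : ι → Ω' → ℝ}
    (hX : ∀ i, Integrable (X i) μ) (hX01 : ∀ i, ∀ᵐ ω ∂μ, X i ω ∈ Set.Icc (0 : ℝ) 1)
    (hY01 : ∀ i, ∀ᵐ ω ∂ρ, Y i ω = 0 ∨ Y i ω = 1)
    (hYnested : ∀ i j, Y i ≤ᵐ[ρ] Y j ∨ Y j ≤ᵐ[ρ] Y i)
    (hXY : ∀ i, ∫ ω, X i ω ∂μ = ∫ ω, Y i ω ∂ρ) (i j : ι) :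
    ∫ ω, X i ω * X j ω ∂μ ≤ ∫ ω, Y i ω * Y j ω ∂ρ := by
  wlog hij : Y i ≤ᵐ[ρ] Y j generalizing i j
  · simpa only [mul_comm] using this j i ((hYnested i j).resolve_left hij)
  have hYj : ∀ᵐ ω ∂ρ, Y j ω ≤ 1 := (ae_mem_Icc_of_eq_zero_or_one (hY01 j)).mono fun _ h => h.2
  calc ∫ ω, X i ω * X j ω ∂μ
    _ ≤ ∫ ω, X i ω ∂μ := integral_mul_le_left (hX i) ((hX01 i).mono fun _ h => h.1) (hX01 j)
    _ = ∫ ω, Y i ω ∂ρ := hXY i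
    _ = ∫ ω, Y i ω * Y j ω ∂ρ := (integral_mul_eq_left_of_eq_zero_or_one (hY01 i) hYj hij).symm

end Moments

section WeightedSum

variable {ι : Type*} {q : ι → ℝ}

lemma summable_mul_of_norm_le {x : ι → ℝ} {C : ℝ} (hq : Summable q) (hx : ∀ i, ‖x i‖ ≤ C) :
    Summable fun i => q i * x i :=
  .of_norm_bounded (hq.norm.mul_right C) fun i => norm_mul_le_of_le le_rfl (hx i)

lemma tsum_mul_mem_Icc {x : ι → ℝ} (hq0 : ∀ i, 0 ≤ q i) (hq : Summable q) (hq1 : ∑' i, q i ≤ 1)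
    (hx : ∀ i, x i ∈ Set.Icc (0 : ℝ) 1) : ∑' i, q i * x i ∈ Set.Icc (0 : ℝ) 1 := by
  have hle (i : ι) : q i * x i ≤ q i := mul_le_of_le_one_right (hq0 i) (hx i).2
  have h0 (i : ι) : 0 ≤ q i * x i := mul_nonneg (hq0 i) (hx i).1
  exact ⟨tsum_nonneg h0, ((hq.of_nonneg_of_le h0 hle).tsum_le_tsum hle hq).trans hq1⟩

variable {Ω Ω' : Type*} [MeasurableSpace Ω] [MeasurableSpace Ω'] {μ : Measure Ω} {ρ : Measure Ω'}
  [IsFiniteMeasure μ] [IsFiniteMeasure ρ] {X : ι → Ω → ℝ} {Y : ι → Ω' → ℝ} {C D : ℝ}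

lemma summable_mul_integral_mul (hq : Summable q) (hXC : ∀ i, ∀ᵐ ω ∂μ, ‖X i ω‖ ≤ C) :
    Summable fun ij : ι × ι => q ij.1 * q ij.2 * ∫ ω, X ij.1 ω * X ij.2 ω ∂μ :=
  summable_mul_of_norm_le (summable_mul_of_summable_norm hq.norm hq.norm) fun ij =>
    norm_integral_le_of_norm_le_const (ae_norm_mul_le (hXC ij.1) (hXC ij.2))

variable [Countable ι]

lemma integral_tsum_mul (hq : Summable q) (hX : ∀ i, AEMeasurable (X i) μ)
    (hXC : ∀ i, ∀ᵐ ω ∂μ, ‖X i ω‖ ≤ C) :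
    ∫ ω, ∑' i, q i * X i ω ∂μ = ∑' i, q i * ∫ ω, X i ω ∂μ := by
  have hint (i : ι) : Integrable (X i) μ := .of_bound (hX i).aestronglyMeasurable C (hXC i)
  have hsum : Summable fun i => ∫ ω, ‖q i * X i ω‖ ∂μ := by
    simp_rw [norm_mul, integral_const_mul]
    exact summable_mul_of_norm_le hq.norm fun i =>
      norm_integral_le_of_norm_le_const ((hXC i).mono fun ω h => (norm_norm (X i ω)).trans_le h)
  rw [← integral_tsum_of_summable_integral_norm (fun i => (hint i).const_mul _) hsum]
  simp_rw [integral_const_mul]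

lemma integral_tsum_mul_sq (hq : Summable q) (hX : ∀ i, AEMeasurable (X i) μ)
    (hXC : ∀ i, ∀ᵐ ω ∂μ, ‖X i ω‖ ≤ C) :
    ∫ ω, (∑' i, q i * X i ω) ^ 2 ∂μ =
      ∑' ij : ι × ι, q ij.1 * q ij.2 * ∫ ω, X ij.1 ω * X ij.2 ω ∂μ := by
  have hsquare : ∀ᵐ ω ∂μ, (∑' i, q i * X i ω) ^ 2 =
      ∑' ij : ι × ι, q ij.1 * q ij.2 * (X ij.1 ω * X ij.2 ω) := by
    filter_upwards [ae_all_iff.2 hXC] with ω hω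
    have hs : Summable fun i => ‖q i * X i ω‖ := (summable_mul_of_norm_le hq hω).norm
    rw [sq, tsum_mul_tsum_of_summable_norm hs hs]
    simp_rw [mul_mul_mul_comm]
  rw [integral_congr_ae hsquare]
  exact integral_tsum_mul (summable_mul_of_summable_norm hq.norm hq.norm)
    (fun ij => (hX ij.1).mul (hX ij.2)) fun ij => ae_norm_mul_le (hXC ij.1) (hXC ij.2)

lemma integral_tsum_mul_sq_mono (hq0 : ∀ i, 0 ≤ q i) (hq : Summable q)
    (hX : ∀ i, AEMeasurable (X i) μ) (hXC : ∀ i, ∀ᵐ ω ∂μ, ‖X i ω‖ ≤ C)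
    (hY : ∀ i, AEMeasurable (Y i) ρ) (hYD : ∀ i, ∀ᵐ ω ∂ρ, ‖Y i ω‖ ≤ D)
    (hXY : ∀ i j, ∫ ω, X i ω * X j ω ∂μ ≤ ∫ ω, Y i ω * Y j ω ∂ρ) :
    ∫ ω, (∑' i, q i * X i ω) ^ 2 ∂μ ≤ ∫ ω, (∑' i, q i * Y i ω) ^ 2 ∂ρ := by
  rw [integral_tsum_mul_sq hq hX hXC, integral_tsum_mul_sq hq hY hYD]
  exact (summable_mul_integral_mul hq hXC).tsum_le_tsum
    (fun ij => mul_le_mul_of_nonneg_left (hXY ij.1 ij.2) (mul_nonneg (hq0 ij.1) (hq0 ij.2)))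
    (summable_mul_integral_mul hq hYD)

end WeightedSum

theorem variance_IS_le_variance_CMC_le_variance_NMC_general
    {ι Ω Ω' : Type*} [Countable ι] [MeasurableSpace Ω] [MeasurableSpace Ω']
    {μ : Measure Ω} {ρ : Measure Ω'} [IsProbabilityMeasure μ] [IsProbabilityMeasure ρ]
    {q p : ι → ℝ} {X : ι → Ω → ℝ} {Y : ι → Ω' → ℝ}
    (hq0 : ∀ i, 0 ≤ q i) (hq : Summable q) (hq1 : ∑' i, q i ≤ 1)
    (hX : ∀ i, AEMeasurable (X i) μ) (hX01 : ∀ i, ∀ᵐ ω ∂μ, X i ω ∈ Set.Icc (0 : ℝ) 1)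
    (hY : ∀ i, AEMeasurable (Y i) ρ) (hY01 : ∀ i, ∀ᵐ ω ∂ρ, Y i ω = 0 ∨ Y i ω = 1)
    (hYnested : ∀ i j, Y i ≤ᵐ[ρ] Y j ∨ Y j ≤ᵐ[ρ] Y i)
    (hXp : ∀ i, ∫ ω, X i ω ∂μ = p i) (hYp : ∀ i, ∫ ω, Y i ω ∂ρ = p i) :
    (∫ ω, (∑' i, q i * X i ω) ^ 2 ∂μ ≤ ∫ ω, (∑' i, q i * Y i ω) ^ 2 ∂ρ) ∧
    (∫ ω, (∑' i, q i * Y i ω) ^ 2 ∂ρ ≤ ∑' i, q i * p i) ∧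
    variance (fun ω => ∑' i, q i * X i ω) μ ≤ variance (fun ω => ∑' i, q i * Y i ω) ρ ∧
    variance (fun ω => ∑' i, q i * Y i ω) ρ ≤
      (∑' i, q i * p i) * (1 - ∑' i, q i * p i) := by
  have hYIcc (i : ι) := ae_mem_Icc_of_eq_zero_or_one (hY01 i)
  have hX1 (i : ι) := ae_norm_le_one_of_mem_Icc (hX01 i)
  have hY1 (i : ι) := ae_norm_le_one_of_mem_Icc (hYIcc i)
  have hXmeas : AEMeasurable (fun ω => ∑' i, q i * X i ω) μ := .tsum fun i => (hX i).const_mul _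
  have hYmeas : AEMeasurable (fun ω => ∑' i, q i * Y i ω) ρ := .tsum fun i => (hY i).const_mul _
  have hXsum := (ae_all_iff.2 hX01).mono fun _ => tsum_mul_mem_Icc hq0 hq hq1
  have hYsum := (ae_all_iff.2 hYIcc).mono fun _ => tsum_mul_mem_Icc hq0 hq hq1
  have hXmean : ∫ ω, ∑' i, q i * X i ω ∂μ = ∑' i, q i * p i := by
    simp_rw [integral_tsum_mul hq hX hX1, hXp]
  have hYmean : ∫ ω, ∑' i, q i * Y i ω ∂ρ = ∑' i, q i * p i := by
    simp_rw [integral_tsum_mul hq hY hY1, hYp]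
  have hsq := integral_tsum_mul_sq_mono hq0 hq hX hX1 hY hY1 <|
    integral_mul_le_integral_mul_of_nested (fun i => .of_mem_Icc 0 1 (hX i) (hX01 i)) hX01 hY01
      hYnested fun i => (hXp i).trans (hYp i).symm
  refine ⟨hsq, (integral_sq_le_integral_of_mem_Icc hYmeas hYsum).trans_eq hYmean, ?_, ?_⟩
  · exact variance_le_variance_of_integral_sq_le
      (memLp_of_bounded hXsum hXmeas.aestronglyMeasurable 2)
      (memLp_of_bounded hYsum hYmeas.aestronglyMeasurable 2) (hXmean.trans hYmean.symm) hsq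
  · simpa only [hYmean, sub_zero, mul_comm] using variance_le_sub_mul_sub hYsum hYmeas

/-- Proposition 1: variance ordering of the importance sampling estimator
`Ỹ = Σ_n q_n J_n L_n` (under μ), the conditional Monte Carlo estimator
`Ŷ = Σ_n q_n I_n` (under ρ), and the naive Bernoulli estimator with mean
`p* = Σ_n q_n p_n`. -/
theorem variance_IS_le_variance_CMC_le_variance_NMC
    {Ω Ω' : Type*} [MeasurableSpace Ω] [MeasurableSpace Ω']
    (μ : Measure Ω) (ρ : Measure Ω') [IsProbabilityMeasure μ] [IsProbabilityMeasure ρ]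
    (β : ℝ) (hβ : 0 < β)
    (J L : ℕ → Ω → ℝ) (I : ℕ → Ω' → ℝ)
    (hJmeas : ∀ n, Measurable (J n)) (hLmeas : ∀ n, Measurable (L n))
    (hImeas : ∀ n, Measurable (I n))
    (hJ01 : ∀ n ω, J n ω = 0 ∨ J n ω = 1)
    (hL01 : ∀ n ω, L n ω ∈ Set.Icc (0 : ℝ) 1)
    (hI01 : ∀ n ω, I n ω = 0 ∨ I n ω = 1)
    (hImono : ∀ n ω, I (n + 1) ω ≤ I n ω)
    (p : ℕ → ℝ)
    (hp : ∀ n, p n = ∫ ω, I n ω ∂ρ)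
    (hcm : ∀ n, ∫ ω, J n ω * L n ω ∂μ = p n) :
    (∫ ω, (∑' n : ℕ, poissonPMF β n * (J n ω * L n ω)) ^ 2 ∂μ ≤
        ∫ ω, (∑' n : ℕ, poissonPMF β n * I n ω) ^ 2 ∂ρ) ∧
    (∫ ω, (∑' n : ℕ, poissonPMF β n * I n ω) ^ 2 ∂ρ ≤ ∑' n : ℕ, poissonPMF β n * p n) ∧
    variance (fun ω => ∑' n : ℕ, poissonPMF β n * (J n ω * L n ω)) μ ≤
        variance (fun ω => ∑' n : ℕ, poissonPMF β n * I n ω) ρ ∧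
    variance (fun ω => ∑' n : ℕ, poissonPMF β n * I n ω) ρ ≤
        (∑' n : ℕ, poissonPMF β n * p n) * (1 - ∑' n : ℕ, poissonPMF β n * p n) := by
  have hq := hasSum_poissonPMF hβ.le
  have hJL01 (n : ℕ) (ω : Ω) : J n ω * L n ω ∈ Set.Icc (0 : ℝ) 1 :=
    unitInterval.mul_mem (by rcases hJ01 n ω with h | h <;> simp [h]) (hL01 n ω)
  have hIanti {m n : ℕ} (hmn : m ≤ n) : I n ≤ᵐ[ρ] I m :=
    .of_forall (antitone_nat_of_succ_le (f := I) hImono hmn)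
  exact variance_IS_le_variance_CMC_le_variance_NMC_general
    (poissonPMF_nonneg hβ.le) hq.summable hq.tsum_eq.le
    (fun n => ((hJmeas n).mul (hLmeas n)).aemeasurable) (fun n => .of_forall (hJL01 n))
    (fun n => (hImeas n).aemeasurable) (fun n => .of_forall (hI01 n))
    (fun m n => (le_total n m).imp hIanti hIanti) hcm (fun n => (hp n).symm)
end

section
/- Let β > 0 and q_n = e^{−β} β^n / n! for n ∈ ℕ. Let X be a measurable space with two probability measures μ and ρ, a nonincreasing sequence of measurable sets A₀ ⊇ A₁ ⊇ A₂ ⊇ ⋯, and measurable functions L_n : X → [0,1] such that for all m ≤ n the change-of-measure identity ∫_{A_n} L_m L_n dμ = ∫_{A_n} L_m dρ holds, and ∫_{A_n} L_n dμ = ρ(A_n). Then ∫ (Σ_n q_n 1_{A_n} L_n)² dμ = Σ_n q_n² ∫_{A_n} L_n dρ + 2 Σ_{m<n} q_n q_m ∫_{A_n} L_m dρ. -/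
open MeasureTheory

/-!
By Hölder's inequality, a series whose terms have summable `L²` norms can be squared and integrated
term by term. Since the double series is symmetric, it is its diagonal plus twice the part `m < n`.
The events are nested, so the `(n, m)` term with `m ≤ n` lives on `A n`, and there the change of
measure absorbs the factor `L n`.
-/

open scoped ENNReal

section SymmetricSeries

variable {ι E : Type*} [AddCommGroup E] [UniformSpace E] [IsUniformAddGroup E] [CompleteSpace E]
  [T2Space E]

theorem tsum_prod_eq_tsum_diag_add_two_nsmul_tsum_Iio [LinearOrder ι] {a : ι × ι → E}
    (ha : Summable a) (hswap : ∀ p, a p.swap = a p) :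
    ∑' p, a p = ∑' i, a (i, i) + 2 • ∑' i, ∑' j : Set.Iio i, a (i, j) := by
  set diag : Set (ι × ι) := {p | p.2 = p.1}
  set lower : Set (ι × ι) := {p | p.2 < p.1}
  set upper : Set (ι × ι) := {p | p.1 < p.2}
  have hsplit (p : ι × ι) :
      a p = diag.indicator a p + (lower.indicator a p + upper.indicator a p) := by
    rcases lt_trichotomy p.1 p.2 with h | h | h
    · simp [diag, lower, upper, h, h.ne', h.not_gt]
    · simp [diag, lower, upper, h]
    · simp [diag, lower, upper, h, h.ne, h.not_gt]
  have hdiag : ∑' p, diag.indicator a p = ∑' i, a (i, i) := by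
    rw [(ha.indicator diag).tsum_prod]
    refine tsum_congr fun i ↦ ?_
    rw [tsum_eq_single i fun j (hj : (i, j) ∉ diag) ↦ Set.indicator_of_notMem hj a]
    exact Set.indicator_of_mem (show (i, i) ∈ diag from rfl) a
  have hlower : ∑' p, lower.indicator a p = ∑' i, ∑' j : Set.Iio i, a (i, j) := by
    rw [(ha.indicator lower).tsum_prod]
    exact tsum_congr fun i ↦ (tsum_subtype (Set.Iio i) fun j ↦ a (i, j)).symm
  have hupper : ∑' p, upper.indicator a p = ∑' p, lower.indicator a p := by
    rw [← (Equiv.prodComm ι ι).tsum_eq]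
    refine tsum_congr fun p ↦ ?_
    simp [Set.indicator, upper, lower, hswap]
  rw [tsum_congr hsplit,
    (ha.indicator diag).tsum_add ((ha.indicator lower).add (ha.indicator upper)),
    (ha.indicator lower).tsum_add (ha.indicator upper), hdiag, hupper, hlower, two_nsmul]

theorem tsum_prod_nat_eq_tsum_diag_add_two_nsmul_tsum_range {a : ℕ × ℕ → E}
    (ha : Summable a) (hswap : ∀ p, a p.swap = a p) :
    ∑' p, a p = ∑' n, a (n, n) + 2 • ∑' n, ∑ m ∈ Finset.range n, a (n, m) := by
  have hrange (n : ℕ) : ∑' m : Set.Iio n, a (n, m) = ∑ m ∈ Finset.range n, a (n, m) := by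
    rw [← Finset.coe_range, Finset.tsum_subtype' (Finset.range n) fun m ↦ a (n, m)]
  rw [tsum_prod_eq_tsum_diag_add_two_nsmul_tsum_Iio ha hswap, tsum_congr hrange]

end SymmetricSeries

section ProductOfSeries

variable {X : Type*} [MeasurableSpace X] {μ : Measure X}

theorem tsum_eLpNorm_ne_top_of_norm_le {ι E : Type*} [NormedAddCommGroup E] [IsFiniteMeasure μ]
    (p : ℝ≥0∞) {f : ι → X → E} {b : ι → ℝ} (hb : Summable b)
    (hfb : ∀ i, ∀ᵐ x ∂μ, ‖f i x‖ ≤ b i) : ∑' i, eLpNorm (f i) p μ ≠ ∞ := by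
  have hmass : μ Set.univ ^ p.toReal⁻¹ ≠ ∞ :=
    ENNReal.rpow_ne_top_of_nonneg (by positivity) (measure_ne_top μ _)
  refine ne_top_of_le_ne_top (ENNReal.mul_ne_top hmass hb.tsum_ofReal_ne_top) ?_
  rw [← ENNReal.tsum_mul_left]
  exact ENNReal.tsum_le_tsum fun i ↦ eLpNorm_le_of_ae_bound (hfb i)

theorem hasSum_integral_mul_of_tsum_eLpNorm_ne_top {ι κ R : Type*} [Countable ι] [Countable κ]
    [NormedRing R] [NormedSpace ℝ R] [CompleteSpace R] {p q : ℝ≥0∞} [p.HolderConjugate q]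
    {f : ι → X → R} {g : κ → X → R}
    (hf : ∀ i, AEStronglyMeasurable (f i) μ) (hg : ∀ j, AEStronglyMeasurable (g j) μ)
    (hfp : ∑' i, eLpNorm (f i) p μ ≠ ∞) (hgq : ∑' j, eLpNorm (g j) q μ ≠ ∞) :
    HasSum (fun k : ι × κ ↦ ∫ x, f k.1 x * g k.2 x ∂μ)
      (∫ x, (∑' i, f i x) * ∑' j, g j x ∂μ) := by
  have hfg_meas (k : ι × κ) : AEStronglyMeasurable (fun x ↦ f k.1 x * g k.2 x) μ :=
    (hf k.1).mul (hg k.2)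
  have holder (k : ι × κ) :
      ∫⁻ x, ‖f k.1 x * g k.2 x‖ₑ ∂μ ≤ eLpNorm (f k.1) p μ * eLpNorm (g k.2) q μ := by
    rw [← eLpNorm_one_eq_lintegral_enorm]
    exact eLpNorm_smul_le_mul_eLpNorm (f := g k.2) (φ := f k.1) (hg k.2) (hf k.1)
  have hfinite : ∑' k : ι × κ, ∫⁻ x, ‖f k.1 x * g k.2 x‖ₑ ∂μ ≠ ∞ := by
    refine ne_top_of_le_ne_top (ENNReal.mul_ne_top hfp hgq) ?_
    calc ∑' k : ι × κ, ∫⁻ x, ‖f k.1 x * g k.2 x‖ₑ ∂μ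
        ≤ ∑' k : ι × κ, eLpNorm (f k.1) p μ * eLpNorm (g k.2) q μ := ENNReal.tsum_le_tsum holder
      _ = (∑' i, eLpNorm (f i) p μ) * ∑' j, eLpNorm (g j) q μ := by
        simp only [ENNReal.tsum_prod', ENNReal.tsum_mul_left, ENNReal.tsum_mul_right]
  have hsummable : Summable fun k : ι × κ ↦ ∫ x, f k.1 x * g k.2 x ∂μ :=
    .of_enorm <| ne_top_of_le_ne_top hfinite <|
      ENNReal.tsum_le_tsum fun _ ↦ enorm_integral_le_lintegral_enorm _
  have hproduct : ∀ᵐ x ∂μ,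
      (∑' i, f i x) * ∑' j, g j x = ∑' k : ι × κ, f k.1 x * g k.2 x := by
    filter_upwards [
      summable_norm_of_tsum_eLpNorm_ne_top (ENNReal.HolderConjugate.one_le p q) hf hfp,
      summable_norm_of_tsum_eLpNorm_ne_top (ENNReal.HolderConjugate.one_le q p) hg hgq]
      with x hfx hgx using tsum_mul_tsum_of_summable_norm hfx hgx
  rw [integral_congr_ae hproduct, integral_tsum hfg_meas hfinite]
  exact hsummable.hasSum

theorem integral_sq_tsum_of_tsum_eLpNorm_ne_top {R : Type*} [NormedCommRing R] [NormedSpace ℝ R]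
    [CompleteSpace R] {f : ℕ → X → R} (hf : ∀ n, AEStronglyMeasurable (f n) μ)
    (hf2 : ∑' n, eLpNorm (f n) 2 μ ≠ ∞) :
    ∫ x, (∑' n, f n x) ^ 2 ∂μ =
      ∑' n, ∫ x, f n x ^ 2 ∂μ + 2 * ∑' n, ∑ m ∈ Finset.range n, ∫ x, f n x * f m x ∂μ := by
  have hsum := hasSum_integral_mul_of_tsum_eLpNorm_ne_top hf hf hf2 hf2
  simp only [pow_two]
  rw [← hsum.tsum_eq, tsum_prod_nat_eq_tsum_diag_add_two_nsmul_tsum_range hsum.summable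
    fun k ↦ by simp only [Prod.fst_swap, Prod.snd_swap, mul_comm], nsmul_eq_mul, Nat.cast_ofNat]

end ProductOfSeries

theorem integral_const_mul_indicator_mul_const_mul_indicator {X 𝕜 : Type*} [MeasurableSpace X]
    [RCLike 𝕜] {μ : Measure X} {s t : Set X} (hs : MeasurableSet s) (hst : s ⊆ t)
    (c d : 𝕜) (f g : X → 𝕜) :
    ∫ x, c * s.indicator f x * (d * t.indicator g x) ∂μ = c * d * ∫ x in s, f x * g x ∂μ := by
  rw [← integral_indicator hs, ← integral_const_mul]
  congr 1 with x
  by_cases hx : x ∈ s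
  · simp only [Set.indicator_of_mem hx, Set.indicator_of_mem (hst hx)]
    ring
  · simp only [Set.indicator_of_notMem hx, mul_zero, zero_mul]

theorem norm_mul_indicator_le {X R : Type*} [NormedRing R] (c : R) (s : Set X) {f : X → R} {x : X}
    (hfx : ‖f x‖ ≤ 1) : ‖c * s.indicator f x‖ ≤ ‖c‖ :=
  (norm_mul_le _ _).trans <| mul_le_of_le_one_right (norm_nonneg c) <|
    (norm_indicator_le_norm_self f x).trans hfx

theorem summable_poissonPMF (β : ℝ) : Summable (poissonPMF β) := by
  refine ((Real.summable_pow_div_factorial β).mul_left (Real.exp (-β))).congr fun n ↦ ?_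
  rw [poissonPMF, mul_div_assoc]

theorem integral_sq_tsum_indicator_likelihood_general
    {X : Type*} [MeasurableSpace X] {μ ρ : Measure X} {q : ℕ → ℝ}
    {A : ℕ → Set X} (hAmeas : ∀ n, MeasurableSet (A n)) (hA : Antitone A)
    {L : ℕ → X → ℝ} (hLmeas : ∀ n, AEStronglyMeasurable (L n) (μ.restrict (A n)))
    (hL2 : ∑' n, eLpNorm (fun x ↦ q n * (A n).indicator (L n) x) 2 μ ≠ ∞)
    (hcm : ∀ m n, m ≤ n → ∫ x in A n, L m x * L n x ∂μ = ∫ x in A n, L m x ∂ρ) :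
    ∫ x, (∑' n, q n * (A n).indicator (L n) x) ^ 2 ∂μ =
      ∑' n, q n ^ 2 * ∫ x in A n, L n x ∂ρ +
        2 * ∑' n, ∑ m ∈ Finset.range n, q n * q m * ∫ x in A n, L m x ∂ρ := by
  have hmeas (n : ℕ) : AEStronglyMeasurable (fun x ↦ q n * (A n).indicator (L n) x) μ :=
    ((aestronglyMeasurable_indicator_iff (hAmeas n)).2 (hLmeas n)).const_mul (q n)
  have hpair {m n : ℕ} (hmn : m ≤ n) :
      ∫ x, q n * (A n).indicator (L n) x * (q m * (A m).indicator (L m) x) ∂μ =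
        q n * q m * ∫ x in A n, L m x ∂ρ := by
    rw [integral_const_mul_indicator_mul_const_mul_indicator (hAmeas n) (hA hmn), ← hcm m n hmn]
    simp only [mul_comm (L n _)]
  rw [integral_sq_tsum_of_tsum_eLpNorm_ne_top hmeas hL2]
  congr 1
  · exact tsum_congr fun n ↦ by simpa only [pow_two] using hpair (le_refl n)
  · refine congrArg (2 * ·) <| tsum_congr fun n ↦ Finset.sum_congr rfl fun m hm ↦ ?_
    exact hpair (Finset.mem_range.1 hm).le

/-- Eq. (6.5) of Proposition 2: the exact second moment of the importance sampling
estimator, `∫ (Σ_n q_n 1_{A_n} L_n)² dμ = Σ_n q_n² ∫_{A_n} L_n dρ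
+ 2 Σ_{m<n} q_n q_m ∫_{A_n} L_m dρ`. -/
theorem integral_sq_tsum_indicator_likelihood
    {X : Type*} [MeasurableSpace X] (μ ρ : Measure X)
    [IsProbabilityMeasure μ] [IsProbabilityMeasure ρ]
    (β : ℝ) (hβ : 0 < β)
    (A : ℕ → Set X) (hAmeas : ∀ n, MeasurableSet (A n))
    (hAmono : ∀ n, A (n + 1) ⊆ A n)
    (L : ℕ → X → ℝ) (hLmeas : ∀ n, Measurable (L n))
    (hL01 : ∀ n x, L n x ∈ Set.Icc (0 : ℝ) 1)
    (hcm : ∀ m n, m ≤ n → ∫ x in A n, L m x * L n x ∂μ = ∫ x in A n, L m x ∂ρ)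
    (hρ : ∀ n, ∫ x in A n, L n x ∂μ = (ρ (A n)).toReal) :
    ∫ x, (∑' n : ℕ, poissonPMF β n * (A n).indicator (L n) x) ^ 2 ∂μ =
      ∑' n : ℕ, (poissonPMF β n) ^ 2 * ∫ x in A n, L n x ∂ρ +
        2 * ∑' n : ℕ, ∑ m ∈ Finset.range n,
          poissonPMF β n * poissonPMF β m * ∫ x in A n, L m x ∂ρ :=
  integral_sq_tsum_indicator_likelihood_general hAmeas (antitone_nat_of_succ_le hAmono)
    (fun n ↦ (hLmeas n).aestronglyMeasurable)
    (tsum_eLpNorm_ne_top_of_norm_le 2 (summable_poissonPMF β).norm fun n ↦ .of_forall fun x ↦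
      norm_mul_indicator_le _ _ ((Real.norm_of_nonneg (hL01 n x).1).trans_le (hL01 n x).2))
    hcm
end
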